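/- For all n ≥ 1, D_n(q) = sum over k with 2 ≤ 2k ≤ n-1 of ((1 - q^{2k})/(1 - q)) * ((q^{2k+2}; q)_{n-2k-1} / (1 - q)^{n-2k-1}) * q^{binom(2k,2)} + q^{binom(n,2)} * χ(n even), where D_n(q) is the generating polynomial for derangements of order n by major index. In particular D_n(q) is a polynomial in q with nonnegative integer coefficients. -/

import Mathlib

open Finset

attribute [local instance] Classical.propDecidable

noncomputable section

/-- The word `x_1 x_2 ... x_n` (0-indexed) of a signed permutation of order `n`,
encoded as a pair (permutation, signs): `x_i = ±(σ(i)+1)`. -/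
def sword (n : ℕ) (w : Equiv.Perm (Fin n) × (Fin n → Bool)) : ℕ → ℤ :=
  fun i => if h : i < n then
      (if w.2 ⟨i, h⟩ then -(((w.1 ⟨i, h⟩ : ℕ) : ℤ) + 1) else (((w.1 ⟨i, h⟩ : ℕ) : ℤ) + 1))
    else 0

/-- number of negative letters -/
def negStat (n : ℕ) (x : ℕ → ℤ) : ℕ := ((Finset.range n).filter (fun i => x i < 0)).card

/-- number of positive fixed points (`x_i = i`, 1-indexed) -/
def fixPlus (n : ℕ) (x : ℕ → ℤ) : ℕ :=
  ((Finset.range n).filter (fun i => x i = (i : ℤ) + 1)).card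

/-- number of negative fixed points (`x_i = -i`, 1-indexed) -/
def fixMinus (n : ℕ) (x : ℕ → ℤ) : ℕ :=
  ((Finset.range n).filter (fun i => x i = -((i : ℤ) + 1))).card

/-- major index of the word -/
def majStat (n : ℕ) (x : ℕ → ℤ) : ℕ :=
  ∑ i ∈ Finset.range (n - 1), if x (i + 1) < x i then i + 1 else 0

/-- number of inversions of the word -/
def invStat (n : ℕ) (x : ℕ → ℤ) : ℕ :=
  ((Finset.range n ×ˢ Finset.range n).filter (fun p => p.1 < p.2 ∧ x p.2 < x p.1)).card

/-- length function `ℓ(w) = inv w + ∑_{x_i<0} |x_i|` -/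
def lenStat (n : ℕ) (x : ℕ → ℤ) : ℕ :=
  invStat n x + ∑ i ∈ Finset.range n, if x i < 0 then (x i).natAbs else 0

/-- flag-major index `fmaj = 2 maj + neg` -/
def fmajStat (n : ℕ) (x : ℕ → ℤ) : ℕ := 2 * majStat n x + negStat n x

/-- the word `x_0 ... x_{m-1}` has its leftmost trough at position `2k` (1-indexed):
`x_1 > x_2 > ... > x_{2k}` and `x_{2k} < x_{2k+1}` (with `x_{m+1} = ∞`). -/
def IsDesarAt (m k : ℕ) (x : ℕ → ℤ) : Prop :=
  1 ≤ k ∧ 2 * k ≤ m ∧ (∀ i, i + 1 < 2 * k → x (i + 1) < x i) ∧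
    (2 * k = m ∨ x (2 * k - 1) < x (2 * k))

/-- a word of length `m` is a desarrangement (empty word included) -/
def IsDesar (m : ℕ) (x : ℕ → ℤ) : Prop :=
  m = 0 ∨ ∃ k, IsDesarAt m k x

/-- the length of the longest right factor of the word of length `n`
which is a desarrangement -/
def dlen (n : ℕ) (x : ℕ → ℤ) : ℕ :=
  sSup {m | m ≤ n ∧ IsDesar m (fun i => x (n - m + i))}

/-- number of letters of `w^-` in the pixed factorization `w = w^- w^+ w^d` -/
def pixMinus (n : ℕ) (x : ℕ → ℤ) : ℕ :=
  ((Finset.range (n - dlen n x)).filter (fun i => x i < 0)).card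

/-- number of letters of `w^+` in the pixed factorization `w = w^- w^+ w^d` -/
def pixPlus (n : ℕ) (x : ℕ → ℤ) : ℕ :=
  ((Finset.range (n - dlen n x)).filter (fun i => 0 < x i)).card

/-- the number of derangements of an `m`-element set -/
def dnum (m : ℕ) : ℕ :=
  (Finset.univ.filter (fun σ : Equiv.Perm (Fin m) => ∀ i, σ i ≠ i)).card

/-- the word of an ordinary permutation of `{1, ..., m}` -/
def pword (m : ℕ) (σ : Equiv.Perm (Fin m)) : ℕ → ℤ :=
  fun i => if h : i < m then ((σ ⟨i, h⟩ : ℕ) : ℤ) + 1 else 0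

/-- the q-ascending factorial `(q;q)_m` -/
def qq {K : Type*} [CommRing K] (q : K) (m : ℕ) : K :=
  ∏ i ∈ Finset.range m, (1 - q ^ (i + 1))

/-- `D_m(q)`: generating polynomial for derangements of order `m` by major index -/
def Dmaj {K : Type*} [CommRing K] (q : K) (m : ℕ) : K :=
  ∑ σ ∈ Finset.univ.filter (fun σ : Equiv.Perm (Fin m) => ∀ i, σ i ≠ i),
    q ^ majStat m (pword m σ)

/-! Classify the permutations of `{1, ..., n}` by the set of their non-fixed points, on which they
restrict to a derangement `τ` of `{1, ..., m}`. Replacing every fixed point by `0`, keeping the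
letters `σ i > i` and making the letters `σ i < i` negative does not change the descents of the
word, and turns it into a shuffle of `n - m` zeros with the word so attached to `τ`. For every word
`w` of `m` nonzero letters, the shuffles of `w` with `n - m` zeros have generating polynomial
`q ^ maj w * [n choose m]` by major index: this is an induction on `n` which keeps track of the last
letter. Applied to derangements it gives `∑ m, [n choose m] * D_m = [n]!`, where the right-hand side
is MacMahon's count of all permutations, itself obtained from the shuffle count by inserting the
largest letter. A unitriangular inversion turns this identity into
`D_{n+1} = [n+1] * D_n + (-1)^(n+1) * q ^ ((n+1) choose 2)`. When this is iterated, the signed term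
of an odd index `2k + 1` combines with that of `2k`, by
`[2k+1] * q ^ (2k choose 2) - q ^ ((2k+1) choose 2) = [2k] * q ^ (2k choose 2)`, which leaves the
subtraction-free formula. -/

section LibraryComplements

theorem sum_powersetCard_insert {α M : Type*} [DecidableEq α] [AddCommMonoid M] {x : α}
    {s : Finset α} (hx : x ∉ s) (n : ℕ) (f : Finset α → M) :
    ∑ t ∈ powersetCard (n + 1) (insert x s), f t
      = ∑ t ∈ powersetCard (n + 1) s, f t + ∑ t ∈ powersetCard n s, f (insert x t) := by
  have notMem {k : ℕ} {t : Finset α} (ht : t ∈ powersetCard k s) : x ∉ t :=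
    fun h => hx ((mem_powersetCard.1 ht).1 h)
  rw [powersetCard_succ_insert hx, sum_union, sum_image]
  · intro t ht u hu htu
    rw [← erase_insert (notMem ht), ← erase_insert (notMem hu), htu]
  · rw [disjoint_left]
    rintro _ ht hu
    obtain ⟨u, -, rfl⟩ := mem_image.1 hu
    exact notMem ht (mem_insert_self _ _)

theorem sum_powersetCard_eq_sum_compl_singleton {α M : Type*} [Fintype α] [DecidableEq α]
    [AddCommMonoid M] {n : ℕ} (hn : Fintype.card α = n + 1) (f : Finset α → M) :
    ∑ s ∈ powersetCard n univ, f s = ∑ a, f {a}ᶜ := by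
  symm
  refine sum_bij (fun a _ => {a}ᶜ) (fun a _ => ?_) (fun a _ b _ h => ?_) (fun s hs => ?_)
    (fun _ _ => rfl)
  · rw [mem_powersetCard_univ, card_compl, card_singleton, hn, Nat.add_sub_cancel]
  · exact singleton_injective (compl_injective h)
  · obtain ⟨a, ha⟩ : ∃ a, sᶜ = {a} := by
      rw [← card_eq_one, card_compl, mem_powersetCard_univ.1 hs, hn, Nat.add_sub_cancel_left]
    exact ⟨a, mem_univ a, by rw [← ha, compl_compl]⟩

theorem eq_of_sum_unitriangular_mul_eq {R : Type*} [CommRing R] {c : ℕ → ℕ → R}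
    (hc : ∀ n, c n n = 1) {a b : ℕ → R}
    (h : ∀ n, ∑ k ∈ range (n + 1), c n k * a k = ∑ k ∈ range (n + 1), c n k * b k) : a = b := by
  funext n
  induction n using Nat.strong_induction_on with
  | _ n ih =>
    have lower : ∑ k ∈ range n, c n k * a k = ∑ k ∈ range n, c n k * b k :=
      sum_congr rfl fun k hk => by rw [ih k (mem_range.1 hk)]
    simpa only [sum_range_succ, lower, hc, one_mul, add_right_inj] using h n

theorem exists_viaEmbedding_eq {α β : Type*} [Fintype α] [Fintype β] [DecidableEq β]
    (ι : α ↪ β) {σ : Equiv.Perm β} (hσ : σ.support ⊆ univ.map ι) :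
    ∃ τ : Equiv.Perm α, τ.viaEmbedding ι = σ := by
  obtain ⟨ρ, rfl⟩ : σ ∈ (Equiv.Perm.ofSubtype (p := (· ∈ Set.range ι))).range := by
    rw [Equiv.Perm.mem_range_ofSubtype_iff]
    intro b hb
    simpa using hσ hb
  refine ⟨(Equiv.ofInjective ι ι.injective).symm.permCongr ρ, ?_⟩
  ext b
  by_cases hb : b ∈ Set.range ι
  · obtain ⟨a, rfl⟩ := hb
    rw [Equiv.Perm.viaEmbedding_apply, Equiv.Perm.ofSubtype_apply_of_mem _ ⟨a, rfl⟩]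
    simp [Equiv.permCongr_apply, Equiv.apply_ofInjective_symm]
  · rw [Equiv.Perm.viaEmbedding_apply_of_notMem _ _ _ hb,
      Equiv.Perm.ofSubtype_apply_of_not_mem _ hb]

theorem support_viaEmbedding {α β : Type*} [Fintype α] [Fintype β] [DecidableEq α]
    [DecidableEq β] (ι : α ↪ β) (τ : Equiv.Perm α) :
    (τ.viaEmbedding ι).support = τ.support.map ι := by
  ext b
  by_cases hb : b ∈ Set.range ι
  · obtain ⟨a, rfl⟩ := hb
    rw [Equiv.Perm.mem_support, Equiv.Perm.viaEmbedding_apply, mem_map', Equiv.Perm.mem_support,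
      ι.injective.ne_iff]
  · rw [Equiv.Perm.mem_support, Equiv.Perm.viaEmbedding_apply_of_notMem _ _ _ hb]
    exact iff_of_false (· rfl) fun h => hb (mem_map.1 h |>.imp fun _ h => h.2)

theorem sum_filter_support_eq_map {α β M : Type*} [Fintype α] [Fintype β] [DecidableEq β]
    [AddCommMonoid M] (ι : α ↪ β) (f : Equiv.Perm β → M) :
    ∑ σ with σ.support = univ.map ι, f σ
      = ∑ τ : Equiv.Perm α with ∀ a, τ a ≠ a, f (τ.viaEmbedding ι) := by
  have support_eq_univ (τ : Equiv.Perm α) : τ.support = univ ↔ ∀ a, τ a ≠ a := by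
    simp only [eq_univ_iff_forall, Equiv.Perm.mem_support]
  symm
  refine sum_bij (fun τ _ => τ.viaEmbedding ι) (fun τ hτ => ?_)
    (fun _ _ _ _ h => Equiv.Perm.viaEmbeddingHom_injective ι h) (fun σ hσ => ?_) (fun _ _ => rfl)
  · rw [mem_filter_univ] at hτ ⊢
    rw [support_viaEmbedding, (support_eq_univ τ).2 hτ]
  · rw [mem_filter_univ] at hσ
    obtain ⟨τ, rfl⟩ := exists_viaEmbedding_eq ι hσ.subset
    rw [support_viaEmbedding, map_inj, support_eq_univ] at hσ
    exact ⟨τ, by simpa using hσ, rfl⟩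

end LibraryComplements

section QAnalogues

variable {R : Type*} [CommRing R] (q : R)

/-- The `q`-integer `[n]_q = 1 + q + ⋯ + q^(n-1)`. -/
def qInt (n : ℕ) : R := ∑ i ∈ range n, q ^ i

/-- The `q`-factorial `[n]_q! = [1]_q [2]_q ⋯ [n]_q`. -/
def qFactorial (n : ℕ) : R := ∏ i ∈ range n, qInt q (i + 1)

/-- The Gaussian binomial coefficient `[n choose k]_q`, defined by a `q`-Pascal recurrence so that
it makes sense without division. -/
def qBinom : ℕ → ℕ → R
  | _, 0 => 1
  | 0, _ + 1 => 0
  | n + 1, k + 1 => qBinom n k + q ^ (k + 1) * qBinom n (k + 1)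

theorem qInt_zero : qInt q 0 = 0 := sum_range_zero _

theorem qInt_one : qInt q 1 = 1 := by simp [qInt]

theorem qInt_succ (n : ℕ) : qInt q (n + 1) = q ^ n + qInt q n := geom_sum_succ'

theorem qInt_succ' (n : ℕ) : qInt q (n + 1) = q * qInt q n + 1 := geom_sum_succ

theorem qInt_eq_div {K : Type*} [Field K] {q : K} (hq : 1 - q ≠ 0) (n : ℕ) :
    qInt q n = (1 - q ^ n) / (1 - q) := by
  rw [qInt, geom_sum_eq (sub_ne_zero.1 hq).symm, ← neg_sub, ← neg_sub 1 q, neg_div_neg_eq]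

theorem qFactorial_succ (n : ℕ) : qFactorial q (n + 1) = qFactorial q n * qInt q (n + 1) :=
  prod_range_succ _ _

theorem qBinom_zero_right (n : ℕ) : qBinom q n 0 = 1 := by cases n <;> rfl

theorem qBinom_zero_succ (k : ℕ) : qBinom q 0 (k + 1) = 0 := rfl

theorem qBinom_succ_succ (n k : ℕ) :
    qBinom q (n + 1) (k + 1) = qBinom q n k + q ^ (k + 1) * qBinom q n (k + 1) := rfl

theorem qBinom_eq_zero_of_lt {n k : ℕ} (h : n < k) : qBinom q n k = 0 := by
  induction n generalizing k with
  | zero => obtain ⟨k, rfl⟩ := Nat.exists_eq_add_one.2 h; exact qBinom_zero_succ q k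
  | succ n ih =>
    obtain ⟨k, rfl⟩ := Nat.exists_eq_add_one.2 (Nat.zero_lt_of_lt h)
    rw [qBinom_succ_succ, ih (by omega), ih (by omega), mul_zero, add_zero]

theorem qBinom_self (n : ℕ) : qBinom q n n = 1 := by
  induction n with
  | zero => rfl
  | succ n ih =>
    rw [qBinom_succ_succ, ih, qBinom_eq_zero_of_lt q n.lt_succ_self, mul_zero, add_zero]

theorem qBinom_succ_self (n : ℕ) : qBinom q (n + 1) n = qInt q (n + 1) := by
  induction n with
  | zero => rw [qBinom_zero_right, qInt_one]
  | succ n ih => rw [qBinom_succ_succ, ih, qBinom_self, qInt_succ q (n + 1)]; ring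

theorem qInt_mul_qBinom_succ_succ (n k : ℕ) :
    qInt q (k + 1) * qBinom q (n + 1) (k + 1) = qInt q (n + 1) * qBinom q n k := by
  induction n generalizing k with
  | zero => cases k <;> simp [qBinom, qInt_one]
  | succ n ih =>
    cases k with
    | zero =>
      have ih₀ := ih 0
      have pascal := qBinom_succ_succ q (n + 1) 0
      have last := qInt_succ' q (n + 1)
      simp only [zero_add, qInt_one, pow_one, qBinom_zero_right, one_mul, mul_one]
        at ih₀ pascal last ⊢
      linear_combination pascal + q * ih₀ - last
    | succ k =>
      linear_combination qInt q (k + 2) * qBinom_succ_succ q (n + 1) (k + 1)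
        + q ^ (k + 2) * ih (k + 1) - q * qInt q (n + 1) * qBinom_succ_succ q n k + q * ih k
        + qBinom q (n + 1) (k + 1) * (qInt_succ' q (k + 1) - qInt_succ' q (n + 1))

theorem qBinom_one_right (n : ℕ) : qBinom q (n + 1) 1 = qInt q (n + 1) := by
  simpa only [zero_add, qInt_one, one_mul, qBinom_zero_right, mul_one]
    using qInt_mul_qBinom_succ_succ q n 0

theorem qBinom_succ_succ' (n k : ℕ) :
    qBinom q (n + 1) (k + 1) = q ^ (n - k) * qBinom q n k + qBinom q n (k + 1) := by
  induction n generalizing k with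
  | zero => cases k <;> simp [qBinom]
  | succ n ih =>
    cases k with
    | zero =>
      rw [qBinom_one_right, qBinom_one_right, qBinom_zero_right, qInt_succ, Nat.sub_zero, mul_one]
    | succ k =>
      rcases lt_or_ge n (k + 1) with h | h
      · rw [qBinom_succ_succ, qBinom_eq_zero_of_lt q (show n + 1 < k + 1 + 1 by omega),
          Nat.sub_eq_zero_of_le (by omega)]
        ring
      · have hpow : q ^ (n - k) = q * q ^ (n - (k + 1)) := by
          rw [← pow_succ']; congr 1; omega
        have ih₀ := ih k
        rw [Nat.add_sub_add_right]
        rw [hpow] at ih₀ ⊢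
        linear_combination qBinom_succ_succ q (n + 1) (k + 1) + ih₀ + q ^ (k + 2) * ih (k + 1)
          - q * q ^ (n - (k + 1)) * qBinom_succ_succ q n k - qBinom_succ_succ q n (k + 1)

theorem pow_mul_qBinom (n k : ℕ) :
    q ^ n * qBinom q n k = q ^ k * (q ^ (n - k) * qBinom q n k) := by
  rcases lt_or_ge n k with h | h
  · simp only [qBinom_eq_zero_of_lt q h, mul_zero]
  · rw [← mul_assoc, ← pow_add]; congr 2; omega

theorem choose_two_succ (n : ℕ) : (n + 1).choose 2 = n + n.choose 2 := by
  rw [Nat.choose_succ_succ', Nat.choose_one_right]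

theorem alternating_sum_range_qBinom (n N : ℕ) :
    ∑ k ∈ range (N + 1), qBinom q (n + 1) k * ((-1) ^ k * q ^ k.choose 2)
      = (-1) ^ N * q ^ (N + 1).choose 2 * qBinom q n N := by
  induction N with
  | zero => simp [qBinom_zero_right]
  | succ N ih =>
    rw [sum_range_succ, ih, qBinom_succ_succ, choose_two_succ (N + 1)]
    ring

theorem alternating_sum_qBinom (n : ℕ) :
    ∑ k ∈ range (n + 2), qBinom q (n + 1) k * ((-1) ^ k * q ^ k.choose 2) = 0 := by
  rw [alternating_sum_range_qBinom, qBinom_eq_zero_of_lt q n.lt_succ_self, mul_zero]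

end QAnalogues

section Words

variable {R : Type*} [CommRing R] (q : R) (w : ℕ → ℤ)

theorem majStat_congr {n : ℕ} {x y : ℕ → ℤ}
    (h : ∀ i, i + 1 < n → (x (i + 1) < x i ↔ y (i + 1) < y i)) : majStat n x = majStat n y :=
  sum_congr rfl fun i hi => if_congr (h i (Nat.add_lt_of_lt_sub (mem_range.1 hi))) rfl rfl

theorem majStat_one : majStat 1 w = 0 := sum_range_zero _

theorem majStat_add_two (n : ℕ) :
    majStat (n + 2) w = majStat (n + 1) w + if w (n + 1) < w n then n + 1 else 0 :=
  sum_range_succ _ _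

theorem pow_majStat_add_two (n : ℕ) :
    q ^ majStat (n + 2) w
      = q ^ majStat (n + 1) w * if w (n + 1) < w n then q ^ (n + 1) else 1 := by
  rw [majStat_add_two, pow_add, pow_ite, pow_zero]

/-- The shuffle of `w` with a word of zeros in which the letters of `w`, in order, occupy the
positions in `S`. -/
def shuffleZeros (S : Finset ℕ) (w : ℕ → ℤ) : ℕ → ℤ :=
  fun i => if i ∈ S then w (Nat.count (· ∈ S) i) else 0

theorem shuffleZeros_of_notMem {S : Finset ℕ} {i : ℕ} (hi : i ∉ S) : shuffleZeros S w i = 0 :=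
  if_neg hi

theorem shuffleZeros_map (m : ℕ) (e : Fin m ↪o ℕ) (j : Fin m) :
    shuffleZeros (univ.map e.toEmbedding) w (e j) = w j := by
  have hcount : {i ∈ range (e j) | i ∈ univ.map e.toEmbedding} = (Iio j).map e.toEmbedding := by
    ext i
    simp only [mem_filter, mem_range, mem_map, mem_univ, true_and, mem_Iio]
    constructor
    · rintro ⟨hi, k, rfl⟩
      exact ⟨k, e.lt_iff_lt.1 hi, rfl⟩
    · rintro ⟨k, hk, rfl⟩
      exact ⟨e.lt_iff_lt.2 hk, k, rfl⟩
  have hmem : e j ∈ univ.map e.toEmbedding := mem_map_of_mem e.toEmbedding (mem_univ j)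
  rw [shuffleZeros, if_pos hmem, Nat.count_eq_card_filter_range, hcount, card_map, Fin.card_Iio]

theorem shuffleZeros_insert_of_lt (S : Finset ℕ) {n i : ℕ} (hi : i < n) :
    shuffleZeros (insert n S) w i = shuffleZeros S w i := by
  have mem_insert_iff {j : ℕ} (hj : j < n) : j ∈ insert n S ↔ j ∈ S := by
    rw [mem_insert, or_iff_right hj.ne]
  have hcount : Nat.count (· ∈ insert n S) i = Nat.count (· ∈ S) i := by
    simp only [Nat.count_eq_card_filter_range]
    exact congrArg card
      (filter_congr fun j hj => mem_insert_iff ((mem_range.1 hj).trans hi))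
  simp only [shuffleZeros, mem_insert_iff hi, hcount]

theorem shuffleZeros_insert_self {S : Finset ℕ} {n : ℕ} (hS : S ⊆ range n) :
    shuffleZeros (insert n S) w n = w S.card := by
  have hcount : {i ∈ range n | i ∈ insert n S} = S := by
    ext i
    grind
  rw [shuffleZeros, if_pos (mem_insert_self n S), Nat.count_eq_card_filter_range, hcount]

theorem majStat_shuffleZeros_insert (S : Finset ℕ) {n k : ℕ} (hnk : n ≤ k) :
    majStat n (shuffleZeros (insert k S) w) = majStat n (shuffleZeros S w) :=
  majStat_congr fun i hi => by
    rw [shuffleZeros_insert_of_lt w S (by omega), shuffleZeros_insert_of_lt w S (by omega)]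

/-- The generating polynomial by major index for the shuffles of the first `m` letters of `w` with
`n - m` zeros, each followed by an extra `0`. -/
def shuffleSumZero (n m : ℕ) : R :=
  ∑ S ∈ powersetCard m (range n), q ^ majStat (n + 1) (shuffleZeros S w)

/-- The generating polynomial by major index for the shuffles of the first `m` letters of `w` with
`n - m` zeros, each followed by the letter `w m`. -/
def shuffleSumLetter (n m : ℕ) : R :=
  ∑ S ∈ powersetCard m (range n), q ^ majStat (n + 1) (shuffleZeros (insert n S) w)

theorem notMem_of_mem_powersetCard_range {m n k : ℕ} {S : Finset ℕ}
    (hS : S ∈ powersetCard m (range n)) (hk : n ≤ k) : k ∉ S :=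
  fun h => hk.not_gt (mem_range.1 ((mem_powersetCard.1 hS).1 h))

theorem majStat_shuffleZeros_empty (n : ℕ) : majStat n (shuffleZeros ∅ w) = 0 := by
  simp [majStat, shuffleZeros]

theorem shuffleSumLetter_zero_right (n : ℕ) :
    shuffleSumLetter q w n 0 = if w 0 < 0 then q ^ n else 1 := by
  rw [shuffleSumLetter, powersetCard_zero, sum_singleton]
  cases n with
  | zero => simp [majStat_one]
  | succ n =>
    rw [pow_majStat_add_two, majStat_shuffleZeros_insert w ∅ le_rfl, majStat_shuffleZeros_empty,
      shuffleZeros_insert_self w (empty_subset _), shuffleZeros_insert_of_lt w ∅ n.lt_succ_self,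
      shuffleZeros_of_notMem w (notMem_empty n), pow_zero, one_mul, card_empty]

theorem shuffleSumZero_succ_succ (n m : ℕ) :
    shuffleSumZero q w (n + 1) (m + 1)
      = shuffleSumZero q w n (m + 1)
        + shuffleSumLetter q w n m * if 0 < w m then q ^ (n + 1) else 1 := by
  rw [shuffleSumZero, range_add_one, sum_powersetCard_insert notMem_range_self, shuffleSumZero,
    shuffleSumLetter, sum_mul]
  congr 1 <;> refine sum_congr rfl fun S hS => ?_
  · rw [pow_majStat_add_two,
      shuffleZeros_of_notMem w (notMem_of_mem_powersetCard_range hS le_rfl),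
      shuffleZeros_of_notMem w (notMem_of_mem_powersetCard_range hS n.le_succ),
      if_neg (lt_irrefl _), mul_one]
  · have hlast : n + 1 ∉ insert n S := by
      rw [mem_insert, not_or]
      exact ⟨n.succ_ne_self, notMem_of_mem_powersetCard_range hS n.le_succ⟩
    obtain ⟨hsub, hcard⟩ := mem_powersetCard.1 hS
    rw [pow_majStat_add_two, shuffleZeros_of_notMem w hlast, shuffleZeros_insert_self w hsub, hcard]

theorem shuffleSumLetter_succ_succ (n m : ℕ) :
    shuffleSumLetter q w (n + 1) (m + 1)
      = shuffleSumZero q w n (m + 1) * (if w (m + 1) < 0 then q ^ (n + 1) else 1)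
        + shuffleSumLetter q w n m * if w (m + 1) < w m then q ^ (n + 1) else 1 := by
  rw [shuffleSumLetter, range_add_one, sum_powersetCard_insert notMem_range_self, shuffleSumZero,
    shuffleSumLetter, sum_mul, sum_mul]
  congr 1 <;> refine sum_congr rfl fun S hS => ?_ <;>
    obtain ⟨hsub, hcard⟩ := mem_powersetCard.1 hS
  · rw [pow_majStat_add_two, majStat_shuffleZeros_insert w S le_rfl,
      shuffleZeros_insert_self w (hsub.trans (range_subset_range.2 n.le_succ)),
      shuffleZeros_insert_of_lt w S n.lt_succ_self,
      shuffleZeros_of_notMem w (notMem_of_mem_powersetCard_range hS le_rfl), hcard]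
  · have hsub' : insert n S ⊆ range (n + 1) := range_add_one ▸ insert_subset_insert n hsub
    rw [pow_majStat_add_two, majStat_shuffleZeros_insert w _ le_rfl,
      shuffleZeros_insert_self w hsub', shuffleZeros_insert_of_lt w _ n.lt_succ_self,
      shuffleZeros_insert_self w hsub,
      card_insert_of_notMem (notMem_of_mem_powersetCard_range hS le_rfl), hcard]

theorem shuffleSum_eq (n : ℕ) {m : ℕ} (hw : ∀ i ≤ m, w i ≠ 0) :
    shuffleSumZero q w n (m + 1)
        = q ^ majStat (m + 1) w * (if 0 < w m then q ^ (m + 1) else 1) * qBinom q n (m + 1)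
      ∧ shuffleSumLetter q w n m
        = q ^ majStat (m + 1) w * (if 0 < w m then 1 else q ^ (n - m)) * qBinom q n m := by
  induction n generalizing m with
  | zero =>
    cases m <;> simp [shuffleSumZero, shuffleSumLetter, qBinom, majStat_one]
  | succ n ih =>
    constructor
    · rw [shuffleSumZero_succ_succ, (ih hw).1, (ih hw).2]
      have shift := pow_mul_qBinom q n m
      have pascal := qBinom_succ_succ' q n m
      split_ifs
      · linear_combination q ^ majStat (m + 1) w * (q * shift - q ^ (m + 1) * pascal)
      · linear_combination -q ^ majStat (m + 1) w * pascal
    · cases m with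
      | zero =>
        rw [shuffleSumLetter_zero_right, majStat_one, qBinom_zero_right]
        grind
      | succ m =>
        obtain ⟨hzero, hletter⟩ := ih fun i (hi : i ≤ m) => hw i (by omega)
        rw [shuffleSumLetter_succ_succ, hzero, hletter, pow_majStat_add_two,
          Nat.add_sub_add_right]
        have shift := pow_mul_qBinom q n m
        have shift' := pow_mul_qBinom q (n + 1) (m + 1)
        rw [Nat.add_sub_add_right] at shift'
        have pascal := qBinom_succ_succ q n m
        have pascal' := qBinom_succ_succ' q n m
        have hne := hw (m + 1) le_rfl
        -- The goals are indexed by the signs of `w m` and `w (m + 1)` and, where these agree, by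
        -- whether `w (m + 1) < w m`.
        split_ifs <;> try omega
        · linear_combination q ^ majStat (m + 1) w * (shift' - q ^ (n + 1) * pascal)
        · linear_combination q ^ majStat (m + 1) w * (q * shift - q ^ (m + 1) * pascal')
        · linear_combination -q ^ majStat (m + 1) w * pascal
        · linear_combination q ^ majStat (m + 1) w * (shift' - q ^ (n + 1) * pascal')
        · linear_combination q ^ majStat (m + 1) w * (shift' - q ^ (n - m) * (q * shift)
            - q ^ (n - m) * pascal - q ^ (n + 1) * pascal' + q ^ (m + 1) * q ^ (n - m) * pascal')
        · linear_combination -q ^ majStat (m + 1) w * pascal'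

theorem sum_pow_majStat_shuffleZeros (n : ℕ) {m : ℕ} (hw : ∀ i < m, w i ≠ 0) :
    ∑ S ∈ powersetCard m (range n), q ^ majStat n (shuffleZeros S w)
      = q ^ majStat m w * qBinom q n m := by
  cases m with
  | zero =>
    rw [powersetCard_zero, sum_singleton, majStat_shuffleZeros_empty, qBinom_zero_right, mul_one]
    rfl
  | succ m =>
    cases n with
    | zero =>
      rw [powersetCard_eq_empty.2 (by simp), sum_empty, qBinom_zero_succ, mul_zero]
    | succ n =>
      obtain ⟨hzero, hletter⟩ := shuffleSum_eq q w n fun i (hi : i ≤ m) => hw i (by omega)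
      rw [range_add_one, sum_powersetCard_insert notMem_range_self, ← shuffleSumZero,
        ← shuffleSumLetter, hzero, hletter]
      split_ifs
      · rw [qBinom_succ_succ]; ring
      · rw [qBinom_succ_succ']; ring

end Words

section Permutations

variable {R : Type*} [CommRing R] (q : R) {m n : ℕ}

theorem sum_pow_majStat_shuffleZeros_fin (w : ℕ → ℤ) (hw : ∀ i < m, w i ≠ 0) :
    ∑ S ∈ powersetCard m (univ : Finset (Fin n)),
        q ^ majStat n (shuffleZeros (S.map Fin.valEmbedding) w)
      = q ^ majStat m w * qBinom q n m := by
  rw [← sum_pow_majStat_shuffleZeros q w n hw, ← Nat.Iio_eq_range, ← Fin.map_valEmbedding_univ,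
    powersetCard_map, sum_map]
  rfl

theorem shuffleZeros_map_fin (w : ℕ → ℤ) (e : Fin m ↪o Fin n) (j : Fin m) :
    shuffleZeros ((univ.map e.toEmbedding).map Fin.valEmbedding) w (e j) = w j := by
  rw [map_map]
  exact shuffleZeros_map w m (e.trans (Fin.valOrderEmb n)) j

theorem majStat_congr_fin {x y : ℕ → ℤ}
    (h : ∀ i j : Fin n, x j < x i ↔ y j < y i) : majStat n x = majStat n y :=
  majStat_congr fun i hi => h ⟨i, i.lt_succ_self.trans hi⟩ ⟨i + 1, hi⟩

theorem pword_val (σ : Equiv.Perm (Fin n)) (i : Fin n) : pword n σ i = (σ i : ℤ) + 1 :=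
  dif_pos i.isLt

/-- The permutation of `Fin (n + 1)` whose word is that of `τ` with the letter `n + 1` inserted at
position `p`. -/
def insertMax (p : Fin (n + 1)) (τ : Equiv.Perm (Fin n)) : Equiv.Perm (Fin (n + 1)) :=
  (finSuccEquiv' p).trans ((Equiv.optionCongr τ).trans (finSuccEquiv' (Fin.last n)).symm)

theorem insertMax_self (p : Fin (n + 1)) (τ : Equiv.Perm (Fin n)) :
    insertMax p τ p = Fin.last n := by
  simp [insertMax]

theorem insertMax_succAbove (p : Fin (n + 1)) (τ : Equiv.Perm (Fin n)) (i : Fin n) :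
    insertMax p τ (p.succAbove i) = (τ i).castSucc := by
  simp [insertMax]

theorem insertMax_bijective :
    Function.Bijective fun x : Fin (n + 1) × Equiv.Perm (Fin n) => insertMax x.1 x.2 := by
  rw [Fintype.bijective_iff_injective_and_card]
  refine ⟨fun ⟨p, τ⟩ ⟨p', τ'⟩ h => ?_, by simp [Fintype.card_perm, Nat.factorial_succ]⟩
  replace h : insertMax p τ = insertMax p' τ' := h
  obtain rfl : p = p' := (insertMax p τ).injective <| by
    rw [insertMax_self, h, insertMax_self]
  refine Prod.ext rfl (Equiv.ext fun i => Fin.castSucc_injective n ?_)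
  rw [← insertMax_succAbove p, h, insertMax_succAbove]

theorem pword_insertMax (p : Fin (n + 1)) (τ : Equiv.Perm (Fin n)) (j : Fin (n + 1)) :
    pword (n + 1) (insertMax p τ) j
      = shuffleZeros (({p}ᶜ : Finset (Fin (n + 1))).map Fin.valEmbedding)
          (fun i => pword n τ i - (n + 1)) j + (n + 1) := by
  rcases Fin.eq_self_or_eq_succAbove p j with rfl | ⟨i, rfl⟩
  · rw [shuffleZeros_of_notMem _ (by simp [Fin.val_inj]), pword_val, insertMax_self,
      Fin.val_last, zero_add]
  · have hmap : univ.map (Fin.succAboveOrderEmb p).toEmbedding = {p}ᶜ := by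
      rw [← Fin.image_succAbove_univ, map_eq_image]
      rfl
    have hletter :=
      shuffleZeros_map_fin (fun i => pword n τ i - (n + 1)) (Fin.succAboveOrderEmb p) i
    rw [hmap, Fin.succAboveOrderEmb_apply] at hletter
    rw [hletter, pword_val, pword_val, insertMax_succAbove, Fin.val_castSucc]
    ring

theorem majStat_pword_insertMax (p : Fin (n + 1)) (τ : Equiv.Perm (Fin n)) :
    majStat (n + 1) (pword (n + 1) (insertMax p τ))
      = majStat (n + 1) (shuffleZeros (({p}ᶜ : Finset (Fin (n + 1))).map Fin.valEmbedding)
          fun i => pword n τ i - (n + 1)) :=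
  majStat_congr_fin fun i j => by simp only [pword_insertMax, add_lt_add_iff_right]

theorem sum_pow_majStat_pword (n : ℕ) :
    ∑ σ : Equiv.Perm (Fin n), q ^ majStat n (pword n σ) = qFactorial q n := by
  induction n with
  | zero => simp [majStat, qFactorial]
  | succ n ih =>
    have insertions (τ : Equiv.Perm (Fin n)) :
        ∑ p, q ^ majStat (n + 1) (pword (n + 1) (insertMax p τ))
          = q ^ majStat n (pword n τ) * qInt q (n + 1) := by
      have hne : ∀ i < n, pword n τ i - (n + 1) ≠ 0 := fun i hi => by
        have := pword_val τ ⟨i, hi⟩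
        dsimp only at this
        omega
      simp only [majStat_pword_insertMax]
      rw [← sum_powersetCard_eq_sum_compl_singleton (Fintype.card_fin (n + 1)) fun S =>
          q ^ majStat (n + 1)
            (shuffleZeros (S.map Fin.valEmbedding) fun i => pword n τ i - (n + 1)),
        sum_pow_majStat_shuffleZeros_fin q _ hne, qBinom_succ_self]
      simp only [majStat, sub_lt_sub_iff_right]
    rw [← Function.Bijective.sum_comp insertMax_bijective, Fintype.sum_prod_type_right,
      sum_congr rfl fun τ _ => insertions τ, ← sum_mul, ih, qFactorial_succ]

/-- The word of `σ` with its fixed points replaced by `0` and `n + 1` subtracted from the letters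
at positions `i` with `σ i < i`, so that deleting the fixed points amounts to deleting zeros. -/
def excWord (n : ℕ) (σ : Equiv.Perm (Fin n)) (i : ℕ) : ℤ :=
  if (i : ℤ) + 1 < pword n σ i then pword n σ i
  else if pword n σ i = i + 1 then 0
  else pword n σ i - (n + 1)

section ExcWord

variable (σ : Equiv.Perm (Fin n))

theorem excWord_eq_zero_iff (i : Fin n) : excWord n σ i = 0 ↔ σ i = i := by
  have := (σ i).isLt
  simp only [excWord, pword_val, Fin.ext_iff]
  split_ifs <;> omega

theorem excWord_pos_iff (i : Fin n) : 0 < excWord n σ i ↔ i < σ i := by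
  have := (σ i).isLt
  simp only [excWord, pword_val, Fin.lt_def]
  split_ifs <;> omega

theorem excWord_neg_iff (i : Fin n) : excWord n σ i < 0 ↔ σ i < i := by
  have := (σ i).isLt
  simp only [excWord, pword_val, Fin.lt_def]
  split_ifs <;> omega

theorem excWord_lt_excWord_iff (i j : Fin n) :
    excWord n σ i < excWord n σ j
      ↔ σ i < i ∧ j ≤ σ j ∨ σ i ≤ i ∧ j < σ j
        ∨ σ i < σ j ∧ (i < σ i ∧ j < σ j ∨ σ i < i ∧ σ j < j) := by
  have := (σ i).isLt
  have := (σ j).isLt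
  simp only [excWord, pword_val, Fin.lt_def, Fin.le_def]
  split_ifs <;> omega

theorem majStat_excWord : majStat n (excWord n σ) = majStat n (pword n σ) := by
  refine majStat_congr fun i hi => ?_
  have hne : (σ ⟨i, by omega⟩ : ℕ) ≠ σ ⟨i + 1, hi⟩ := by
    rw [Fin.val_ne_iff, σ.injective.ne_iff, Fin.ne_iff_vne]
    exact i.lt_succ_self.ne
  have h₀ := pword_val σ ⟨i, by omega⟩
  have h₁ := pword_val σ ⟨i + 1, hi⟩
  dsimp only at h₀ h₁
  simp only [excWord, h₀, h₁]
  push_cast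
  split_ifs <;> omega

end ExcWord

theorem majStat_excWord_viaEmbedding (e : Fin m ↪o Fin n) (τ : Equiv.Perm (Fin m)) :
    majStat n (excWord n (τ.viaEmbedding e.toEmbedding))
      = majStat n (shuffleZeros ((univ.map e.toEmbedding).map Fin.valEmbedding) (excWord m τ)) := by
  set σ := τ.viaEmbedding e.toEmbedding
  have hσ (i : Fin m) : σ (e i) = e (τ i) := Equiv.Perm.viaEmbedding_apply τ e.toEmbedding i
  have excWord_fixed {i : Fin n} (hi : i ∉ Set.range e) : excWord n σ i = 0 :=
    (excWord_eq_zero_iff σ i).2 (Equiv.Perm.viaEmbedding_apply_of_notMem τ e.toEmbedding i hi)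
  have shuffle_fixed {i : Fin n} (hi : i ∉ Set.range e) :
      shuffleZeros ((univ.map e.toEmbedding).map Fin.valEmbedding) (excWord m τ) i = 0 :=
    shuffleZeros_of_notMem _ (by simpa [Fin.val_inj] using hi)
  refine majStat_congr_fin fun j i => ?_
  by_cases hi : i ∈ Set.range e <;> by_cases hj : j ∈ Set.range e
  · obtain ⟨i, rfl⟩ := hi
    obtain ⟨j, rfl⟩ := hj
    simp only [shuffleZeros_map_fin, excWord_lt_excWord_iff, hσ, e.lt_iff_lt, e.le_iff_le]
  · obtain ⟨i, rfl⟩ := hi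
    simp only [shuffleZeros_map_fin, excWord_fixed hj, shuffle_fixed hj, excWord_neg_iff, hσ,
      e.lt_iff_lt]
  · obtain ⟨j, rfl⟩ := hj
    simp only [shuffleZeros_map_fin, excWord_fixed hi, shuffle_fixed hi, excWord_pos_iff, hσ,
      e.lt_iff_lt]
  · rw [excWord_fixed hi, excWord_fixed hj, shuffle_fixed hi, shuffle_fixed hj]

theorem sum_filter_support_eq_pow_majStat {S : Finset (Fin n)} (hS : S ∈ powersetCard m univ) :
    ∑ σ : Equiv.Perm (Fin n) with σ.support = S, q ^ majStat n (excWord n σ)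
      = ∑ τ : Equiv.Perm (Fin m) with ∀ i, τ i ≠ i,
          q ^ majStat n (shuffleZeros (S.map Fin.valEmbedding) (excWord m τ)) := by
  have hmap := map_orderEmbOfFin_univ S (mem_powersetCard_univ.1 hS)
  generalize S.orderEmbOfFin (mem_powersetCard_univ.1 hS) = e at hmap
  subst hmap
  rw [sum_filter_support_eq_map]
  exact sum_congr (by congr!) fun τ _ => by rw [majStat_excWord_viaEmbedding]

theorem sum_powersetCard_support_eq_qBinom_mul_Dmaj (n m : ℕ) :
    ∑ S ∈ powersetCard m (univ : Finset (Fin n)),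
        ∑ σ : Equiv.Perm (Fin n) with σ.support = S, q ^ majStat n (excWord n σ)
      = qBinom q n m * Dmaj q m := by
  rw [sum_congr rfl fun S hS => sum_filter_support_eq_pow_majStat q hS, sum_comm, Dmaj, mul_sum]
  refine sum_congr rfl fun τ hτ => ?_
  have hne : ∀ i < m, excWord m τ i ≠ 0 := fun i hi =>
    (excWord_eq_zero_iff τ ⟨i, hi⟩).not.2 ((mem_filter_univ τ).1 hτ ⟨i, hi⟩)
  rw [sum_pow_majStat_shuffleZeros_fin q _ hne, majStat_excWord, mul_comm]

theorem sum_qBinom_mul_Dmaj (n : ℕ) :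
    ∑ m ∈ range (n + 1), qBinom q n m * Dmaj q m = qFactorial q n := by
  simp only [← sum_pow_majStat_pword, ← majStat_excWord,
    ← sum_powersetCard_support_eq_qBinom_mul_Dmaj]
  rw [← sum_fiberwise univ Equiv.Perm.support, ← powerset_univ, sum_powerset, card_univ,
    Fintype.card_fin]

end Permutations

section Recurrence

variable {R : Type*} [CommRing R] (q : R)

theorem Dmaj_zero : Dmaj q 0 = 1 := by simp [Dmaj, majStat]

theorem Dmaj_succ (n : ℕ) :
    Dmaj q (n + 1) = qInt q (n + 1) * Dmaj q n + (-1) ^ (n + 1) * q ^ (n + 1).choose 2 := by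
  have key : (fun k => Dmaj q (k + 1) - qInt q (k + 1) * Dmaj q k)
      = fun k => (-1) ^ (k + 1) * q ^ (k + 1).choose 2 := by
    refine eq_of_sum_unitriangular_mul_eq (c := fun n k => qBinom q (n + 1) (k + 1))
      (fun n => qBinom_self q (n + 1)) fun n => ?_
    have total := sum_qBinom_mul_Dmaj q (n + 1)
    have alternating := alternating_sum_qBinom q n
    have absorbed : ∑ k ∈ range (n + 1), qBinom q (n + 1) (k + 1) * (qInt q (k + 1) * Dmaj q k)
        = qFactorial q (n + 1) := by
      rw [qFactorial_succ, ← sum_qBinom_mul_Dmaj, sum_mul]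
      refine sum_congr rfl fun k _ => ?_
      linear_combination Dmaj q k * qInt_mul_qBinom_succ_succ q n k
    rw [sum_range_succ', qBinom_zero_right] at total alternating
    simp only [mul_sub, sum_sub_distrib, absorbed]
    rw [Dmaj_zero] at total
    simp only [Nat.choose_zero_succ, pow_zero] at alternating
    linear_combination total - alternating
  exact sub_eq_iff_eq_add'.1 (congrFun key n)

theorem Dmaj_eq_sum_range (n : ℕ) :
    Dmaj q n = ∑ k ∈ range ((n + 1) / 2), qInt q (2 * k)
          * (∏ i ∈ range (n - 2 * k - 1), qInt q (2 * k + 2 + i)) * q ^ (2 * k).choose 2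
        + q ^ n.choose 2 * if Even n then 1 else 0 := by
  have qInt_mul_sum (n : ℕ) {r : ℕ} (hr : 2 * r ≤ n + 1) :
      ∑ k ∈ range r, qInt q (2 * k)
          * (∏ i ∈ range (n + 1 - 2 * k - 1), qInt q (2 * k + 2 + i)) * q ^ (2 * k).choose 2
        = qInt q (n + 1) * ∑ k ∈ range r, qInt q (2 * k)
          * (∏ i ∈ range (n - 2 * k - 1), qInt q (2 * k + 2 + i)) * q ^ (2 * k).choose 2 := by
    rw [mul_sum]
    refine sum_congr rfl fun k hk => ?_
    have hk := mem_range.1 hk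
    rw [show n + 1 - 2 * k - 1 = n - 2 * k - 1 + 1 by omega, prod_range_succ,
      show 2 * k + 2 + (n - 2 * k - 1) = n + 1 by omega]
    ring
  induction n with
  | zero => simp [Dmaj_zero]
  | succ n ih =>
    rw [Dmaj_succ, ih]
    obtain ⟨r, rfl | rfl⟩ := n.even_or_odd'
    · have hodd : ¬Even (2 * r + 1) := by simp
      rw [show (2 * r + 1 + 1) / 2 = r + 1 by omega, show (2 * r + 1) / 2 = r by omega,
        sum_range_succ, qInt_mul_sum (2 * r) (by omega), if_pos (even_two_mul r), if_neg hodd,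
        show 2 * r + 1 - 2 * r - 1 = 0 by omega, prod_range_zero, choose_two_succ, qInt_succ,
        (Nat.not_even_iff_odd.1 hodd).neg_one_pow]
      ring
    · have hodd : ¬Even (2 * r + 1) := by simp
      have heven : Even (2 * r + 1 + 1) := ⟨r + 1, by ring⟩
      rw [show (2 * r + 1 + 1 + 1) / 2 = r + 1 by omega, show (2 * r + 1 + 1) / 2 = r + 1 by omega,
        qInt_mul_sum (2 * r + 1) (by omega), if_neg hodd, if_pos heven, heven.neg_one_pow]
      ring

theorem stmt17_general (n : ℕ) :
    Dmaj q n
      = (∑ k ∈ (range (n + 1)).filter (fun k => 2 ≤ 2 * k ∧ 2 * k ≤ n - 1),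
          qInt q (2 * k) * (∏ i ∈ range (n - 2 * k - 1), qInt q (2 * k + 2 + i))
            * q ^ Nat.choose (2 * k) 2)
        + q ^ Nat.choose n 2 * (if Even n then 1 else 0) := by
  rw [Dmaj_eq_sum_range]
  congr 1
  symm
  refine sum_subset (fun k hk => ?_) fun k hk hk' => ?_
  · simp only [mem_filter, mem_range] at hk ⊢
    omega
  · obtain rfl : k = 0 := by
      simp only [mem_filter, mem_range] at hk hk'
      omega
    rw [mul_zero, qInt_zero, zero_mul, zero_mul]

end Recurrence

theorem stmt17 (K : Type*) [Field K] (q : K) (h1 : (1 : K) - q ≠ 0) (n : ℕ) (hn : 1 ≤ n) :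
    Dmaj q n
      = (∑ k ∈ (Finset.range (n + 1)).filter (fun k => 2 ≤ 2 * k ∧ 2 * k ≤ n - 1),
          ((1 - q ^ (2 * k)) / (1 - q))
            * ((∏ i ∈ Finset.range (n - 2 * k - 1), (1 - q ^ (2 * k + 2 + i)))
                / (1 - q) ^ (n - 2 * k - 1))
            * q ^ Nat.choose (2 * k) 2)
        + q ^ Nat.choose n 2 * (if Even n then 1 else 0) := by
  simp only [stmt17_general, qInt_eq_div h1, prod_div_distrib, prod_const, card_range]
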